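/- Let 𝓡 be a quasifinite domain over ℤ and let A be an 𝓡-algebra which is flat and finitely generated as an 𝓡-module. Let ℚ̄ be an algebraic closure of ℚ and let I be the (finite) set of isomorphism classes of simple modules over A ⊗_𝓡 ℚ̄. Then there exist a quasifinite domain 𝓡' over 𝓡 and two families (L_i)_{i∈I} and (P_i)_{i∈I} of modules over A ⊗_𝓡 𝓡' such that for every geometric point 𝓡' → k: the modules (L_i) ⊗_{𝓡'} k, i ∈ I, form a complete and pairwise non-isomorphic list of representatives of the isomorphism classes of simple A ⊗_𝓡 k-modules, and for each i ∈ I the base change (P_i) ⊗_{𝓡'} k, together with its natural surjection onto (L_i) ⊗_{𝓡'} k, is a projective cover of (L_i) ⊗_{𝓡'} k. -/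

import Mathlib

open TensorProduct

universe u

/-- `S` is a *quasifinite domain* over `R`: `S` is an integral domain and a commutative
`R`-algebra containing an `R`-subalgebra `R'`, finitely generated as an `R`-module, such
that `S` is the localization of `R'` at (the powers of) a single element. -/
def IsQuasifiniteDomain (R S : Type*) [CommRing R] [CommRing S] [Algebra R S] : Prop :=
  IsDomain S ∧ ∃ R' : Subalgebra R S, Module.Finite R R' ∧ ∃ r : R', IsLocalization.Away r S

/-- A bundled quasifinite domain over `R`. -/
structure QuasifiniteExtension (R : Type u) [CommRing R] : Type (u + 1) where
  carrier : Type u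
  [isCommRing : CommRing carrier]
  [isAlgebra : Algebra R carrier]
  isQuasifinite : IsQuasifiniteDomain R carrier

attribute [instance] QuasifiniteExtension.isCommRing QuasifiniteExtension.isAlgebra

/-- A bundled module over a ring `R`. -/
structure BundledModule (R : Type u) [Ring R] : Type (u + 1) where
  carrier : Type u
  [isAddCommGroup : AddCommGroup carrier]
  [isModule : Module R carrier]

attribute [instance] BundledModule.isAddCommGroup BundledModule.isModule

instance (R : Type u) [Ring R] : CoeSort (BundledModule R) (Type u) :=
  ⟨BundledModule.carrier⟩

/-- The family `V` is a complete, pairwise non-isomorphic list of representatives of the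
isomorphism classes of simple `R`-modules. -/
def IsCompleteListOfSimples (R : Type u) [Ring R] {ι : Type u}
    (V : ι → BundledModule R) : Prop :=
  (∀ i, IsSimpleModule R (V i).carrier) ∧
  (∀ i j : ι, i ≠ j → IsEmpty ((V i).carrier ≃ₗ[R] (V j).carrier)) ∧
  (∀ (N : Type u) [AddCommGroup N] [Module R N],
    IsSimpleModule R N → ∃ i, Nonempty (N ≃ₗ[R] (V i).carrier))

/-- `π : M → N` is a projective cover: `π` is surjective, `M` is projective, and no proper
submodule of `M` is mapped onto `N` by `π`. -/
def IsProjectiveCover {R : Type u} [Ring R] {M N : Type u} [AddCommGroup M] [AddCommGroup N]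
    [Module R M] [Module R N] (π : M →ₗ[R] N) : Prop :=
  Function.Surjective π ∧ Module.Projective R M ∧
    ∀ W : Submodule R M, W ≠ ⊤ → Submodule.map π W ≠ ⊤

/-- `(N, f)` is the extension of scalars (base change) of the `B`-module `M` along the
ring homomorphism `j : B →+* C`, expressed by the usual universal property: `f` is
additive and `j`-semilinear, and any additive `j`-semilinear map from `M` to a
`C`-module factors uniquely `C`-linearly through `f`. -/
def IsScalarExtension {B C : Type u} [Ring B] [Ring C] (j : B →+* C)
    (M N : Type u) [AddCommGroup M] [Module B M] [AddCommGroup N] [Module C N]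
    (f : M →+ N) : Prop :=
  (∀ (b : B) (m : M), f (b • m) = j b • f m) ∧
  ∀ (N' : Type u) [AddCommGroup N'] [Module C N'] (g : M →+ N'),
    (∀ (b : B) (m : M), g (b • m) = j b • g m) →
      ∃! h : N →ₗ[C] N', ∀ m : M, h (f m) = g m

/-- The canonical ring homomorphism `A ⊗[𝓡] S → A ⊗[𝓡] k` induced by an `𝓡`-algebra
map `S → k`. -/
noncomputable def baseChangeRingHom (𝓡 A S k : Type u) [CommRing 𝓡] [Ring A] [Algebra 𝓡 A]
    [CommRing S] [Algebra 𝓡 S] [CommRing k] [Algebra S k] [Algebra 𝓡 k]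
    [IsScalarTower 𝓡 S k] : (A ⊗[𝓡] S) →+* (A ⊗[𝓡] k) :=
  (Algebra.TensorProduct.map (AlgHom.id 𝓡 A) (IsScalarTower.toAlgHom 𝓡 S k)).toRingHom

section Auxiliary

open Matrix

/-- The column space `kⁿ`, with `C` acting through a ring homomorphism `ψ : C → Mₙ(k)`. -/
def MatrixColumn {C k : Type u} [Ring C] [CommRing k] {n : ℕ}
    (_ψ : C →+* Matrix (Fin n) (Fin n) k) : Type u :=
  Fin n → k

namespace MatrixColumn

variable {C k : Type u} [Ring C] [CommRing k] {n : ℕ} (ψ : C →+* Matrix (Fin n) (Fin n) k)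

instance : AddCommGroup (MatrixColumn ψ) := inferInstanceAs (AddCommGroup (Fin n → k))

instance : Module C (MatrixColumn ψ) :=
  Module.compHom (Fin n → k) ((toLinAlgEquiv' (R := k) (n := Fin n)).toRingHom.comp ψ)

/-- The vector `v`, viewed in the column module. -/
def of (v : Fin n → k) : MatrixColumn ψ := v

/-- The bundled column module. -/
def bundled : BundledModule C := ⟨MatrixColumn ψ⟩

variable {ψ}

theorem smul_of (c : C) (v : Fin n → k) : c • of ψ v = of ψ (ψ c *ᵥ v) := rfl

theorem of_injective : Function.Injective (of ψ) := fun _ _ h => h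

theorem of_surjective : Function.Surjective (of ψ) := fun v => ⟨v, rfl⟩

theorem of_zero : of ψ 0 = 0 := rfl

theorem of_add (v w : Fin n → k) : of ψ (v + w) = of ψ v + of ψ w := rfl

end MatrixColumn

theorem vecMulVec_mulVec_single {k : Type*} [CommRing k] {n : ℕ} (w : Fin n → k) (a : Fin n) :
    vecMulVec w (Pi.single a 1) *ᵥ Pi.single a 1 = w := by
  rw [vecMulVec_mulVec]
  simp

section SurjectionOntoMatrices

variable {C k : Type u} [Ring C] [Field k] {κ : Type u} [DecidableEq κ]
  {d : κ → ℕ} (Ψ : C →+* ∀ i, Matrix (Fin (d i)) (Fin (d i)) k)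

/-- The component at `i` of a ring homomorphism to a product of matrix rings. -/
abbrev matrixComponent {C : Type*} [Ring C] {k : Type*} [CommRing k] {κ : Type*} {d : κ → ℕ}
    (Ψ : C →+* ∀ i, Matrix (Fin (d i)) (Fin (d i)) k) (i : κ) :
    C →+* Matrix (Fin (d i)) (Fin (d i)) k :=
  (Pi.evalRingHom _ i).comp Ψ

variable {Ψ}

theorem exists_matrixComponent_eq (hΨ : Function.Surjective Ψ) (i : κ)
    (m : Matrix (Fin (d i)) (Fin (d i)) k) : ∃ c, Ψ c = Pi.single i m := hΨ _

theorem isSimpleModule_matrixColumn {n : ℕ} [NeZero n] {ψ : C →+* Matrix (Fin n) (Fin n) k}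
    (hψ : Function.Surjective ψ) : IsSimpleModule C (MatrixColumn ψ) := by
  refine isSimpleModule_iff_toSpanSingleton_surjective.2 ⟨?_, fun x hx y => ?_⟩
  · exact inferInstanceAs (Nontrivial (Fin n → k))
  · obtain ⟨v, rfl⟩ := MatrixColumn.of_surjective x
    obtain ⟨w, rfl⟩ := MatrixColumn.of_surjective y
    have hv : v ≠ 0 := fun h => hx (by rw [h]; rfl)
    obtain ⟨a, ha⟩ := Function.ne_iff.1 hv
    obtain ⟨c, hc⟩ := hψ (vecMulVec w (Pi.single a (v a)⁻¹))
    refine ⟨c, ?_⟩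
    rw [LinearMap.toSpanSingleton_apply, MatrixColumn.smul_of, hc, vecMulVec_mulVec]
    congr 1
    have : v a ≠ 0 := ha
    ext i
    simp [this]

theorem smul_eq_zero_of_nil {N : Type*} [AddCommGroup N] [Module C N] [IsSimpleModule C N]
    {x : C} (hx : ∀ c, IsNilpotent (c * x)) (v : N) : x • v = 0 := by
  by_contra h
  obtain ⟨c, hc⟩ := IsSimpleModule.toSpanSingleton_surjective C h v
  rw [LinearMap.toSpanSingleton_apply, smul_smul] at hc
  have hu : IsUnit (1 - c * x) := (hx c).isUnit_one_sub
  have : (1 - c * x) • v = 0 := by rw [sub_smul, one_smul, hc, sub_self]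
  have hv : v = 0 := by
    obtain ⟨u, hu⟩ := hu
    rw [← hu] at this
    simpa using congrArg (fun y => (↑u⁻¹ : C) • y) this
  exact h (by rw [hv, smul_zero])

theorem exists_linearEquiv_matrixColumn [Fintype κ] [∀ i, NeZero (d i)] (hΨ : Function.Surjective Ψ)
    (hnil : ∀ x, Ψ x = 0 → IsNilpotent x) (N : Type u) [AddCommGroup N] [Module C N]
    [IsSimpleModule C N] : ∃ i, Nonempty (N ≃ₗ[C] MatrixColumn (matrixComponent Ψ i)) := by
  have hker : ∀ x, Ψ x = 0 → ∀ v : N, x • v = 0 := fun x hx v =>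
    smul_eq_zero_of_nil (fun c => hnil _ (by rw [map_mul, hx, mul_zero])) v
  choose e he using fun p : Σ i, Fin (d i) =>
    exists_matrixComponent_eq hΨ p.1 (Matrix.single p.2 p.2 1)
  have := IsSimpleModule.nontrivial C N
  obtain ⟨v, hv⟩ := exists_ne (0 : N)
  have hsum : ∑ p, e p • v = v := by
    rw [← Finset.sum_smul, ← sub_eq_zero]
    nth_rw 2 [← one_smul C v]
    rw [← sub_smul]
    refine hker _ ?_ v
    rw [map_sub, map_one, map_sum, sub_eq_zero, Fintype.sum_sigma]
    simp only [he]
    funext i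
    simp only [Finset.sum_apply, Pi.one_apply]
    rw [Finset.sum_eq_single i]
    · simp only [Pi.single_eq_same]
      exact Matrix.sum_single_one
    · intro j _ hj
      simp [Pi.single_eq_of_ne hj.symm]
    · simp
  obtain ⟨⟨i, a⟩, hia⟩ : ∃ p, e p • v ≠ 0 := by
    by_contra! h
    exact hv (by rw [← hsum]; exact Finset.sum_eq_zero fun p _ => h p)
  have hsurj : Function.Surjective (matrixComponent Ψ i) := fun m => by
    obtain ⟨c, hc⟩ := exists_matrixComponent_eq hΨ i m
    exact ⟨c, by simp [matrixComponent, hc]⟩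
  have := isSimpleModule_matrixColumn hsurj
  set u : MatrixColumn (matrixComponent Ψ i) := MatrixColumn.of _ (Pi.single a 1) with hu
  have hu0 : u ≠ 0 := fun h => by
    have := congrFun (show (Pi.single a 1 : Fin (d i) → k) = 0 from h) a
    simp at this
  set q := LinearMap.toSpanSingleton C _ u
  have hq : Function.Surjective q := IsSimpleModule.toSpanSingleton_surjective C hu0
  have hle : q.ker ≤ (LinearMap.toSpanSingleton C N (e ⟨i, a⟩ • v)).ker := by
    intro c hc
    rw [LinearMap.mem_ker, LinearMap.toSpanSingleton_apply] at hc ⊢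
    rw [smul_smul]
    refine hker _ ?_ v
    have hc' : Ψ c i *ᵥ Pi.single a 1 = 0 := hc
    rw [map_mul, he]
    funext j
    by_cases hj : j = i
    · subst hj
      simp only [Pi.mul_apply, Pi.single_eq_same, Pi.zero_apply]
      ext r s
      by_cases hs : s = a
      · subst hs
        simpa using congrFun hc' r
      · simp [Matrix.mul_single_apply_of_ne _ _ _ _ _ hs]
    · simp [Pi.single_eq_of_ne hj]
  let g : MatrixColumn (matrixComponent Ψ i) →ₗ[C] N :=
    (q.ker.liftQ _ hle) ∘ₗ (q.quotKerEquivOfSurjective hq).symm.toLinearMap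
  have hg : g u = e ⟨i, a⟩ • v := by
    have : (q.quotKerEquivOfSurjective hq).symm u = q.ker.mkQ 1 := by
      rw [LinearEquiv.symm_apply_eq]
      simp [q]
    simp only [g, LinearMap.comp_apply, LinearEquiv.coe_coe, this]
    simp
  have hg0 : g ≠ 0 := fun h => hia (by rw [← hg, h]; rfl)
  exact ⟨i, ⟨(LinearEquiv.ofBijective g (LinearMap.bijective_of_ne_zero hg0)).symm⟩⟩

theorem isCompleteListOfSimples_matrixColumn [Fintype κ] [∀ i, NeZero (d i)] (hΨ : Function.Surjective Ψ)
    (hnil : ∀ x, Ψ x = 0 → IsNilpotent x) :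
    IsCompleteListOfSimples C fun i => MatrixColumn.bundled (matrixComponent Ψ i) := by
  refine ⟨fun i => ?_, fun i j hij => ⟨fun f => ?_⟩, fun N _ _ _ =>
    exists_linearEquiv_matrixColumn hΨ hnil N⟩
  · refine isSimpleModule_matrixColumn (ψ := matrixComponent Ψ i) fun m => ?_
    obtain ⟨c, hc⟩ := exists_matrixComponent_eq hΨ i m
    exact ⟨c, by simp [matrixComponent, hc]⟩
  · change MatrixColumn (matrixComponent Ψ i) ≃ₗ[C] MatrixColumn (matrixComponent Ψ j) at f
    obtain ⟨c, hc⟩ := exists_matrixComponent_eq hΨ i 1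
    let u : MatrixColumn (matrixComponent Ψ i) := MatrixColumn.of _ 1
    have h1 : c • u = u := by
      rw [MatrixColumn.smul_of]
      simp [matrixComponent, hc, u]
    have h2 : ∀ w : MatrixColumn (matrixComponent Ψ j), c • w = 0 := fun w => by
      obtain ⟨w, rfl⟩ := MatrixColumn.of_surjective w
      rw [MatrixColumn.smul_of]
      simp [matrixComponent, hc, Pi.single_eq_of_ne hij.symm, MatrixColumn.of_zero]
    have h3 : u = 0 := f.injective (by rw [← h1, map_smul, h2, map_zero])
    have := congrFun (show (1 : Fin (d i) → k) = 0 from h3) 0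
    simp at this

end SurjectionOntoMatrices

theorem projective_span_idempotent {C : Type*} [Ring C] {e : C} (he : IsIdempotentElem e) :
    Module.Projective C (Submodule.span C {e}) := by
  refine Module.Projective.of_split (Submodule.span C {e}).subtype
    ((LinearMap.toSpanSingleton C _ (⟨e, Submodule.mem_span_singleton_self e⟩ :
      Submodule.span C {e}))) ?_
  ext ⟨x, hx⟩
  obtain ⟨c, rfl⟩ := Submodule.mem_span_singleton.1 hx
  simp [mul_assoc, he.eq]

/-- The submodule generated by an element of a ring, as a bundled module. -/
def bundledSpan {C : Type u} [Ring C] (e : C) : BundledModule C := ⟨Submodule.span C {e}⟩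

/-- The map from the left ideal generated by `e` to the column module sending `e` to the
`a`-th column of its image. -/
def spanToMatrixColumn {C k : Type u} [Ring C] [CommRing k] {n : ℕ}
    (ψ : C →+* Matrix (Fin n) (Fin n) k) (e : C) (a : Fin n) :
    Submodule.span C {e} →ₗ[C] MatrixColumn ψ :=
  (LinearMap.toSpanSingleton C _ (MatrixColumn.of ψ (Pi.single a 1))) ∘ₗ
    (Submodule.span C {e}).subtype

theorem isProjectiveCover_spanToMatrixColumn {C k : Type u} [Ring C] [Field k]
    {κ : Type u} [DecidableEq κ] {d : κ → ℕ} {Ψ : C →+* ∀ i, Matrix (Fin (d i)) (Fin (d i)) k}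
    (hΨ : Function.Surjective Ψ) (hnil : ∀ x, Ψ x = 0 → IsNilpotent x)
    (i : κ) (a : Fin (d i)) {e : C} (he : IsIdempotentElem e)
    (hea : Ψ e = Pi.single i (Matrix.single a a 1)) :
    IsProjectiveCover (spanToMatrixColumn (matrixComponent Ψ i) e a) := by
  have hval : ∀ x : Submodule.span C {e}, spanToMatrixColumn (matrixComponent Ψ i) e a x =
      MatrixColumn.of _ (Ψ x i *ᵥ Pi.single a 1) := fun x => rfl
  refine ⟨fun w => ?_, projective_span_idempotent he, fun W hW hmap => hW ?_⟩
  · obtain ⟨w, rfl⟩ := MatrixColumn.of_surjective w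
    obtain ⟨c, hc⟩ := hΨ (Pi.single i (vecMulVec w (Pi.single a 1)))
    refine ⟨⟨c * e, Submodule.smul_mem _ c (Submodule.mem_span_singleton_self e)⟩, ?_⟩
    rw [hval]
    simp only [map_mul, Pi.mul_apply, hc, hea, Pi.single_eq_same, ← mulVec_mulVec]
    congr 1
    rw [show Matrix.single a a (1 : k) *ᵥ Pi.single a 1 = Pi.single a 1 by
      ext; simp [Matrix.single_apply, Pi.single_apply, eq_comm]]
    exact vecMulVec_mulVec_single w a
  · let e' : Submodule.span C {e} := ⟨e, Submodule.mem_span_singleton_self e⟩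
    have : spanToMatrixColumn (matrixComponent Ψ i) e a e' ∈
        Submodule.map (spanToMatrixColumn (matrixComponent Ψ i) e a) W := hmap ▸ Submodule.mem_top
    obtain ⟨w, hwW, hw⟩ := this
    have hw' : Ψ w i *ᵥ Pi.single a 1 = Ψ e i *ᵥ Pi.single a 1 :=
      MatrixColumn.of_injective hw
    have hwe : (w : C) * e = w := by
      obtain ⟨c, hc⟩ := Submodule.mem_span_singleton.1 w.2
      rw [← hc, smul_eq_mul, mul_assoc, he.eq]
    have hzero : Ψ (e - w) = 0 := by
      have : e - w = (e - w) * e := by rw [sub_mul, hwe, he.eq]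
      rw [this, map_mul, hea]
      funext j
      by_cases hj : j = i
      · subst hj
        simp only [Pi.mul_apply, Pi.single_eq_same, Pi.zero_apply]
        ext r s
        by_cases hs : s = a
        · subst hs
          simpa [sub_eq_zero] using (congrFun hw' r).symm
        · simp [Matrix.mul_single_apply_of_ne _ _ _ _ _ hs]
      · simp [Pi.single_eq_of_ne hj]
    obtain ⟨u, hu⟩ := (hnil _ hzero).isUnit_one_sub
    have hue : (u : C) * e = w := by
      rw [hu, sub_mul, sub_mul, hwe, he.eq]; simp
    have heW : e' ∈ W := by
      have : e' = (↑u⁻¹ : C) • w := by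
        apply Subtype.ext
        change e = (↑u⁻¹ : C) * (w : C)
        rw [← hue, Units.inv_mul_cancel_left]
      rw [this]
      exact W.smul_mem _ hwW
    rw [eq_top_iff]
    rintro ⟨x, hx⟩ -
    obtain ⟨c, rfl⟩ := Submodule.mem_span_singleton.1 hx
    exact W.smul_mem c heW

/-- The restriction of a ring homomorphism `j` to the left ideals generated by `e` and `j e`. -/
def spanMap {B C : Type*} [Ring B] [Ring C] (j : B →+* C) (e : B) :
    Submodule.span B {e} →+ Submodule.span C {j e} where
  toFun x := ⟨j x, by
    obtain ⟨c, hc⟩ := Submodule.mem_span_singleton.1 x.2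
    exact Submodule.mem_span_singleton.2 ⟨j c, by rw [← hc]; simp⟩⟩
  map_zero' := by ext; simp
  map_add' x y := by ext; simp

theorem isScalarExtension_spanMap {B C : Type u} [Ring B] [Ring C] (j : B →+* C) {e : B}
    (he : IsIdempotentElem e) :
    IsScalarExtension j (Submodule.span B {e}) (Submodule.span C {j e}) (spanMap j e) := by
  refine ⟨fun b m => Subtype.ext (map_mul j b m), fun N' _ _ g hg => ?_⟩
  let e' : Submodule.span B {e} := ⟨e, Submodule.mem_span_singleton_self e⟩
  have hmul : ∀ m : Submodule.span B {e}, m = (m : B) • e' := fun m => by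
    obtain ⟨c, hc⟩ := Submodule.mem_span_singleton.1 m.2
    apply Subtype.ext
    change (m : B) = (m : B) * e
    rw [← hc, smul_eq_mul, mul_assoc, he.eq]
  refine ⟨(LinearMap.toSpanSingleton C N' (g e')) ∘ₗ (Submodule.span C {j e}).subtype,
    fun m => ?_, fun h hh => ?_⟩
  · change j m • g e' = g m
    rw [← hg, ← hmul]
  · ext ⟨x, hx⟩
    obtain ⟨c, rfl⟩ := Submodule.mem_span_singleton.1 hx
    change h (c • spanMap j e e') = (c * j e) • g e'
    rw [map_smul, hh, mul_smul, ← hg, ← hmul e']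

section MatrixFibers

variable {𝓡 A S : Type u} [CommRing 𝓡] [Ring A] [Algebra 𝓡 A] [CommRing S] [Algebra 𝓡 S]
  {κ : Type u} {d : κ → ℕ} (φ : A →ₐ[𝓡] ∀ i, Matrix (Fin (d i)) (Fin (d i)) S)
  (T : Type u) [CommRing T] [Algebra 𝓡 T] [Algebra S T] [IsScalarTower 𝓡 S T]

/-- The extension of `φ : A → ∏ Mₙ(S)` to a homomorphism `A ⊗ T → ∏ Mₙ(T)`. -/
noncomputable def matrixFiber :
    A ⊗[𝓡] T →ₐ[𝓡] ∀ i, Matrix (Fin (d i)) (Fin (d i)) T :=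
  Algebra.TensorProduct.lift
    (AlgHom.pi fun i => (IsScalarTower.toAlgHom 𝓡 S T).mapMatrix.comp
      ((Pi.evalAlgHom 𝓡 _ i).comp φ))
    (IsScalarTower.toAlgHom 𝓡 T (∀ i, Matrix (Fin (d i)) (Fin (d i)) T))
    (fun _ t => (Algebra.commutes t _ : Commute (algebraMap T _ t) _).symm)

variable {T}

theorem matrixFiber_tmul (a : A) (t : T) (i : κ) :
    matrixFiber φ T (a ⊗ₜ t) i = t • (φ a i).map (algebraMap S T) := by
  have h : matrixFiber φ T (a ⊗ₜ t) = _ * algebraMap T _ t :=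
    Algebra.TensorProduct.lift_tmul _ _ _ a t
  rw [h, ← Algebra.commutes, ← Algebra.smul_def]
  rfl

theorem matrixFiber_one_tmul (t : T) :
    matrixFiber φ T (1 ⊗ₜ t) = algebraMap T _ t := by
  have h : matrixFiber φ T (1 ⊗ₜ t) = _ * algebraMap T _ t :=
    Algebra.TensorProduct.lift_tmul _ _ _ 1 t
  rw [h, map_one, one_mul]

/-- The action map of `A ⊗ T` on the `i`-th column module. -/
noncomputable abbrev fiberComponent (T : Type u) [CommRing T] [Algebra 𝓡 T] [Algebra S T]
    [IsScalarTower 𝓡 S T] (i : κ) : A ⊗[𝓡] T →+* Matrix (Fin (d i)) (Fin (d i)) T :=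
  matrixComponent (matrixFiber φ T : A ⊗[𝓡] T →+* _) i

theorem matrixFiber_baseChange (x : A ⊗[𝓡] S) (i : κ) :
    matrixFiber φ T (baseChangeRingHom 𝓡 A S T x) i =
      (matrixFiber φ S x i).map (algebraMap S T) := by
  induction x using TensorProduct.induction_on with
  | zero => simp
  | tmul a s =>
    change matrixFiber φ T (a ⊗ₜ algebraMap S T s) i = _
    rw [matrixFiber_tmul, matrixFiber_tmul]
    ext
    simp
  | add x y hx hy =>
    simp only [map_add, Pi.add_apply, hx, hy]
    ext
    simp

/-- Entrywise base change between column modules. -/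
noncomputable def columnMap (T : Type u) [CommRing T] [Algebra 𝓡 T] [Algebra S T]
    [IsScalarTower 𝓡 S T] (i : κ) :
    MatrixColumn (fiberComponent φ S i) →+ MatrixColumn (fiberComponent φ T i) where
  toFun v := MatrixColumn.of _ (algebraMap S T ∘ v)
  map_zero' := by
    refine Eq.trans ?_ MatrixColumn.of_zero
    congr 1
    ext a
    exact map_zero _
  map_add' v w := by
    rw [← MatrixColumn.of_add]
    congr 1
    ext a
    exact map_add _ _ _

theorem columnMap_of (i : κ) (v : Fin (d i) → S) :
    columnMap φ T i (MatrixColumn.of _ v) = MatrixColumn.of _ (algebraMap S T ∘ v) := rfl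

theorem columnMap_smul (i : κ) (b : A ⊗[𝓡] S) (m : MatrixColumn (fiberComponent φ S i)) :
    columnMap φ T i (b • m) = baseChangeRingHom 𝓡 A S T b • columnMap φ T i m := by
  obtain ⟨v, rfl⟩ := MatrixColumn.of_surjective m
  rw [MatrixColumn.smul_of, columnMap_of, columnMap_of, MatrixColumn.smul_of]
  congr 1
  change _ = matrixFiber φ T (baseChangeRingHom 𝓡 A S T b) i *ᵥ _
  rw [matrixFiber_baseChange]
  ext a
  simp [fiberComponent, matrixComponent, RingHom.map_mulVec]

theorem baseChangeRingHom_tmul (a : A) (s : S) :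
    baseChangeRingHom 𝓡 A S T (a ⊗ₜ s) = a ⊗ₜ algebraMap S T s := rfl

theorem one_tmul_smul_of (i : κ) (t : T) (v : Fin (d i) → T) :
    ((1 : A) ⊗ₜ[𝓡] t) • MatrixColumn.of (fiberComponent φ T i) v =
      MatrixColumn.of _ (t • v) := by
  rw [MatrixColumn.smul_of]
  congr 1
  change matrixFiber φ T (1 ⊗ₜ t) i *ᵥ v = _
  rw [matrixFiber_one_tmul, Pi.algebraMap_apply, Matrix.algebraMap_eq_diagonal]
  ext a
  simp [Matrix.mulVec_diagonal]

theorem matrixColumn_of_eq_sum (i : κ) (v : Fin (d i) → T) :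
    MatrixColumn.of (fiberComponent φ T i) v =
      ∑ b, ((1 : A) ⊗ₜ[𝓡] v b) • MatrixColumn.of _ (Pi.single b 1) := by
  have hsum : ∀ f : Fin (d i) → Fin (d i) → T, ∑ b, MatrixColumn.of (fiberComponent φ T i) (f b) =
    MatrixColumn.of _ (∑ b, f b) := fun f => rfl
  simp only [one_tmul_smul_of]
  rw [hsum]
  congr 1
  exact pi_eq_sum_univ' v |>.trans (by congr)

theorem isScalarExtension_columnMap (i : κ) :
    IsScalarExtension (baseChangeRingHom 𝓡 A S T) (MatrixColumn (fiberComponent φ S i))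
      (MatrixColumn (fiberComponent φ T i)) (columnMap φ T i) := by
  refine ⟨columnMap_smul φ i, fun N' _ _ g hg => ?_⟩
  let u : Fin (d i) → MatrixColumn (fiberComponent φ S i) := fun b =>
    MatrixColumn.of _ (Pi.single b 1)
  have hu : ∀ b, columnMap φ T i (u b) = MatrixColumn.of _ (Pi.single b 1) := fun b => by
    rw [columnMap_of]
    congr 1
    ext a
    by_cases hab : a = b
    · subst hab
      simp
    · simp [hab]
  let h₀ : (Fin (d i) → T) →+ N' :=
    { toFun := fun v => ∑ b, ((1 : A) ⊗ₜ[𝓡] v b) • g (u b)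
      map_zero' := by simp
      map_add' := fun v w => by
        simp [TensorProduct.tmul_add, add_smul, Finset.sum_add_distrib] }
  have h₀_apply : ∀ v, h₀ v = ∑ b, ((1 : A) ⊗ₜ[𝓡] v b) • g (u b) := fun _ => rfl
  have h₀g : ∀ v : Fin (d i) → S, h₀ (algebraMap S T ∘ v) = g (MatrixColumn.of _ v) := fun v => by
    rw [matrixColumn_of_eq_sum φ i v, map_sum, h₀_apply]
    refine Finset.sum_congr rfl fun b _ => ?_
    rw [hg, baseChangeRingHom_tmul]
    rfl
  have h₀t : ∀ (t : T) (v : Fin (d i) → T), h₀ (t • v) = ((1 : A) ⊗ₜ[𝓡] t) • h₀ v := fun t v => by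
    rw [h₀_apply, h₀_apply, Finset.smul_sum]
    refine Finset.sum_congr rfl fun b _ => ?_
    rw [smul_smul]
    simp
  have h₀a : ∀ (a : A) (v : Fin (d i) → T),
      h₀ ((φ a i).map (algebraMap S T) *ᵥ v) = (a ⊗ₜ[𝓡] (1 : T)) • h₀ v := fun a v => by
    have key : ∀ w : Fin (d i) → S, h₀ ((φ a i).map (algebraMap S T) *ᵥ (algebraMap S T ∘ w)) =
        (a ⊗ₜ[𝓡] (1 : T)) • h₀ (algebraMap S T ∘ w) := fun w => by
      have hw : (φ a i).map (algebraMap S T) *ᵥ (algebraMap S T ∘ w) =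
          algebraMap S T ∘ (φ a i *ᵥ w) := by
        ext c
        simp [RingHom.map_mulVec]
      have hw' : MatrixColumn.of (fiberComponent φ S i) (φ a i *ᵥ w) =
          (a ⊗ₜ[𝓡] (1 : S)) • MatrixColumn.of _ w := by
        rw [MatrixColumn.smul_of]
        change _ = MatrixColumn.of _ (matrixFiber φ S (a ⊗ₜ 1) i *ᵥ w)
        rw [matrixFiber_tmul, one_smul]
        rfl
      rw [hw, h₀g, h₀g, hw', hg, baseChangeRingHom_tmul, map_one]
    have hv : v = ∑ b, v b • (algebraMap S T ∘ (Pi.single b 1 : Fin (d i) → S)) := by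
      ext c
      simp [Pi.single_apply, apply_ite]
    rw [hv, Matrix.mulVec_sum, map_sum, map_sum, Finset.smul_sum]
    refine Finset.sum_congr rfl fun b _ => ?_
    rw [Matrix.mulVec_smul, h₀t, h₀t, key, smul_smul, smul_smul]
    simp
  let h : MatrixColumn (fiberComponent φ T i) →ₗ[A ⊗[𝓡] T] N' :=
    { toFun := h₀
      map_add' := h₀.map_add
      map_smul' := fun c v => by
        obtain ⟨v, rfl⟩ := MatrixColumn.of_surjective v
        rw [MatrixColumn.smul_of]
        change h₀ (matrixFiber φ T c i *ᵥ v) = c • h₀ v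
        induction c using TensorProduct.induction_on with
        | zero => simp
        | tmul a t =>
          rw [matrixFiber_tmul, Matrix.smul_mulVec, h₀t, h₀a, smul_smul,
            Algebra.TensorProduct.tmul_mul_tmul, one_mul, mul_one]
        | add x y hx hy => rw [map_add, Pi.add_apply, Matrix.add_mulVec, map_add, hx, hy, add_smul] }
  refine ⟨h, fun m => h₀g m, fun h' hh' => ?_⟩
  ext v
  obtain ⟨v, rfl⟩ := MatrixColumn.of_surjective v
  rw [matrixColumn_of_eq_sum φ i v, map_sum, map_sum]
  refine Finset.sum_congr rfl fun b _ => ?_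
  rw [map_smul, map_smul, ← hu, hh']
  exact congrArg _ (h₀g _).symm

end MatrixFibers

section NilpotentKernel

variable {𝓡 A S : Type u} [CommRing 𝓡] [Ring A] [Algebra 𝓡 A] [CommRing S] [Algebra 𝓡 S]
  {κ : Type u} {d : κ → ℕ}
  (φ : A →ₐ[𝓡] ∀ i, Matrix (Fin (d i)) (Fin (d i)) S)

/-- The matrix units of a product of matrix rings. -/
def piMatrixUnit [DecidableEq κ] (T : Type*) [CommRing T] (p : Σ i, Fin (d i) × Fin (d i)) :
    ∀ i, Matrix (Fin (d i)) (Fin (d i)) T :=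
  Pi.single p.1 (Matrix.single p.2.1 p.2.2 1)

theorem sum_smul_piMatrixUnit [Fintype κ] [DecidableEq κ] {T : Type*} [CommRing T]
    (m : ∀ i, Matrix (Fin (d i)) (Fin (d i)) T) :
    ∑ p : Σ i, Fin (d i) × Fin (d i), m p.1 p.2.1 p.2.2 • piMatrixUnit T p = m := by
  funext i
  rw [Fintype.sum_sigma, Finset.sum_apply, Finset.sum_eq_single i]
  · rw [Finset.sum_apply, Fintype.sum_prod_type]
    conv_rhs => rw [Matrix.matrix_eq_sum_single (m i)]
    simp [piMatrixUnit]
  · intro j _ hj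
    rw [Finset.sum_apply]
    exact Finset.sum_eq_zero fun p _ => by simp [piMatrixUnit, Pi.single_eq_of_ne hj.symm]
  · simp

theorem piMatrixUnit_map [DecidableEq κ] {S T : Type*} [CommRing S] [CommRing T] [Algebra S T]
    (p : Σ i, Fin (d i) × Fin (d i)) (i : κ) :
    (piMatrixUnit S p i).map (algebraMap S T) = piMatrixUnit T p i := by
  obtain ⟨j, a, b⟩ := p
  by_cases h : i = j
  · subst h
    simp [piMatrixUnit]
  · simp [piMatrixUnit, Pi.single_eq_of_ne h]

variable (T : Type u) [CommRing T] [Algebra 𝓡 T] [Algebra S T] [IsScalarTower 𝓡 S T]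

/-- The kernel of the map `A ⊗ T → ∏ Mₙ(T)`, as an `𝓡`-submodule. -/
noncomputable abbrev matrixFiberKer : Submodule 𝓡 (A ⊗[𝓡] T) :=
  LinearMap.ker (matrixFiber φ T).toLinearMap

variable {φ}

theorem exists_section_matrixFiber [Fintype κ] [DecidableEq κ]
    (hφ : Function.Surjective (matrixFiber φ S)) :
    ∃ σ : (∀ i, Matrix (Fin (d i)) (Fin (d i)) T) →+ A ⊗[𝓡] T,
      (∀ m, matrixFiber φ T (σ m) = m) ∧
      ∀ x, x - σ (matrixFiber φ T x) ∈
        (matrixFiberKer φ S).map (Algebra.TensorProduct.map (AlgHom.id 𝓡 A)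
          (IsScalarTower.toAlgHom 𝓡 S T)).toLinearMap *
        LinearMap.range (Algebra.TensorProduct.includeRight : T →ₐ[𝓡] A ⊗[𝓡] T).toLinearMap := by
  choose e he using fun p => hφ (piMatrixUnit S p)
  let bc := baseChangeRingHom 𝓡 A S T
  have hbc : ∀ p, matrixFiber φ T (bc (e p)) = piMatrixUnit T p := fun p => by
    funext i
    rw [matrixFiber_baseChange, he, piMatrixUnit_map]
  let σ : (∀ i, Matrix (Fin (d i)) (Fin (d i)) T) →+ A ⊗[𝓡] T :=
    { toFun := fun m => ∑ p, bc (e p) * ((1 : A) ⊗ₜ[𝓡] m p.1 p.2.1 p.2.2)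
      map_zero' := by simp
      map_add' := fun v w => by
        simp [TensorProduct.tmul_add, mul_add, Finset.sum_add_distrib] }
  have hσ : ∀ m, σ m = ∑ p, bc (e p) * ((1 : A) ⊗ₜ[𝓡] m p.1 p.2.1 p.2.2) := fun _ => rfl
  refine ⟨σ, fun m => ?_, fun x => ?_⟩
  · conv_rhs => rw [← sum_smul_piMatrixUnit m]
    rw [hσ, map_sum]
    refine Finset.sum_congr rfl fun p _ => ?_
    rw [map_mul, hbc, matrixFiber_one_tmul, ← Algebra.commutes, ← Algebra.smul_def]
  · induction x using TensorProduct.induction_on with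
    | zero => simp
    | tmul a t =>
      let y : A ⊗[𝓡] S := a ⊗ₜ 1 - ∑ p, e p * ((1 : A) ⊗ₜ[𝓡] φ a p.1 p.2.1 p.2.2)
      have hy : y ∈ matrixFiberKer φ S := by
        rw [LinearMap.mem_ker]
        change matrixFiber φ S y = 0
        have h1 : matrixFiber φ S (a ⊗ₜ 1) = φ a := by
          funext i
          rw [matrixFiber_tmul, one_smul]
          rfl
        rw [map_sub, h1, map_sum, sub_eq_zero]
        conv_lhs => rw [← sum_smul_piMatrixUnit (φ a)]
        refine Finset.sum_congr rfl fun p _ => ?_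
        rw [map_mul, he, matrixFiber_one_tmul, ← Algebra.commutes, ← Algebra.smul_def]
      have hxy : a ⊗ₜ t - σ (matrixFiber φ T (a ⊗ₜ t)) = bc y * ((1 : A) ⊗ₜ[𝓡] t) := by
        rw [hσ, map_sub, map_sum, sub_mul, Finset.sum_mul]
        congr 1
        · change _ = (a ⊗ₜ[𝓡] algebraMap S T 1) * _
          simp
        · refine Finset.sum_congr rfl fun p _ => ?_
          rw [map_mul, mul_assoc, matrixFiber_tmul]
          congr 1
          change _ = ((1 : A) ⊗ₜ[𝓡] algebraMap S T _) * _
          simp [mul_comm]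
      rw [hxy]
      exact Submodule.mul_mem_mul ⟨y, hy, rfl⟩ ⟨t, rfl⟩
    | add x y hx hy =>
      rw [map_add, map_add, add_sub_add_comm]
      exact add_mem hx hy

theorem matrixFiber_surjective [Finite κ] (hφ : Function.Surjective (matrixFiber φ S)) :
    Function.Surjective (matrixFiber φ T) := by
  classical
  have := Fintype.ofFinite κ
  obtain ⟨σ, hσ, -⟩ := exists_section_matrixFiber T hφ
  exact fun m => ⟨σ m, hσ m⟩

theorem isNilpotent_matrixFiberKer [Finite κ] (hφ : Function.Surjective (matrixFiber φ S))
    (hnil : IsNilpotent (matrixFiberKer φ S)) : IsNilpotent (matrixFiberKer φ T) := by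
  classical
  have := Fintype.ofFinite κ
  obtain ⟨σ, -, hσ⟩ := exists_section_matrixFiber T hφ
  obtain ⟨N, hN⟩ := hnil
  set f := Algebra.TensorProduct.map (AlgHom.id 𝓡 A) (IsScalarTower.toAlgHom 𝓡 S T)
  set M := (matrixFiberKer φ S).map f.toLinearMap
  set K := LinearMap.range (Algebra.TensorProduct.includeRight : T →ₐ[𝓡] A ⊗[𝓡] T).toLinearMap
  have hcomm : ∀ (t : T) (z : A ⊗[𝓡] S), Commute (f z) ((1 : A) ⊗ₜ[𝓡] t) := fun t z => by
    induction z using TensorProduct.induction_on with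
    | zero => simp
    | tmul a s => simp [f, Commute, SemiconjBy, mul_comm]
    | add x y hx hy => rw [map_add]; exact hx.add_left hy
  have hMK : Commute M K := by
    refine le_antisymm (Submodule.mul_le.2 ?_) (Submodule.mul_le.2 ?_)
    · rintro _ ⟨z, hz, rfl⟩ _ ⟨t, rfl⟩
      have h : f z * (1 ⊗ₜ t) = (1 ⊗ₜ t) * f z := hcomm t z
      change f z * (1 ⊗ₜ t) ∈ _
      rw [h]
      exact Submodule.mul_mem_mul ⟨t, rfl⟩ ⟨z, hz, rfl⟩
    · rintro _ ⟨t, rfl⟩ _ ⟨z, hz, rfl⟩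
      have h : f z * (1 ⊗ₜ t) = (1 ⊗ₜ t) * f z := hcomm t z
      change (1 ⊗ₜ t) * f z ∈ _
      rw [← h]
      exact Submodule.mul_mem_mul ⟨z, hz, rfl⟩ ⟨t, rfl⟩
  have hle : matrixFiberKer φ T ≤ M * K := fun x hx => by
    have hx' : matrixFiber φ T x = 0 := hx
    simpa [hx'] using hσ x
  refine ⟨N, ?_⟩
  have hz : (M * K) ^ N = 0 := by
    rw [hMK.mul_pow, ← Submodule.map_pow, hN]
    simp
  exact le_bot_iff.1 ((pow_le_pow_left' hle N).trans hz.le)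

theorem isNilpotent_of_matrixFiber_eq_zero (hnil : IsNilpotent (matrixFiberKer φ T))
    (x : A ⊗[𝓡] T) (hx : matrixFiber φ T x = 0) : IsNilpotent x := by
  obtain ⟨N, hN⟩ := hnil
  refine ⟨N, ?_⟩
  have h := Submodule.pow_mem_pow (matrixFiberKer φ T) (show x ∈ matrixFiberKer φ T from hx) N
  rwa [hN] at h

theorem exists_families_of_matrixFiber [Fintype κ] [DecidableEq κ] [∀ i, NeZero (d i)]
    (hφ : Function.Surjective (matrixFiber φ S)) (hnil : IsNilpotent (matrixFiberKer φ S))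
    {ι : Type u} (r : ι ≃ κ) :
    ∃ (L P : ι → BundledModule (A ⊗[𝓡] S))
        (π : ∀ i, (P i).carrier →ₗ[A ⊗[𝓡] S] (L i).carrier),
        ∀ (k : Type u) [Field k] [IsAlgClosed k] [Algebra S k] [Algebra 𝓡 k]
          [IsScalarTower 𝓡 S k],
          ∃ (Lk Pk : ι → BundledModule (A ⊗[𝓡] k))
            (fL : ∀ i, (L i).carrier →+ (Lk i).carrier)
            (fP : ∀ i, (P i).carrier →+ (Pk i).carrier),
            (∀ i, IsScalarExtension (baseChangeRingHom 𝓡 A S k)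
                (L i).carrier (Lk i).carrier (fL i)) ∧
            (∀ i, IsScalarExtension (baseChangeRingHom 𝓡 A S k)
                (P i).carrier (Pk i).carrier (fP i)) ∧
            IsCompleteListOfSimples (A ⊗[𝓡] k) Lk ∧
            (∀ i, ∃ πk : (Pk i).carrier →ₗ[A ⊗[𝓡] k] (Lk i).carrier,
              (∀ m : (P i).carrier, πk (fP i m) = fL i (π i m)) ∧
              IsProjectiveCover πk) := by
  let E : κ → ∀ (R : Type u) [CommRing R], ∀ i, Matrix (Fin (d i)) (Fin (d i)) R :=
    fun j R _ => piMatrixUnit R ⟨j, 0, 0⟩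
  have hE : ∀ j, IsIdempotentElem (E j S) := fun j => by
    simp [E, piMatrixUnit, IsIdempotentElem, ← Pi.single_mul]
  choose e he heE using fun j => exists_isIdempotentElem_eq_of_ker_isNilpotent
    (RingHomClass.toRingHom (matrixFiber φ S))
    (fun x hx => isNilpotent_of_matrixFiber_eq_zero S hnil x hx) (E j S) (hφ _) (hE j)
  refine ⟨fun i => MatrixColumn.bundled (fiberComponent φ S (r i)), fun i => bundledSpan (e (r i)),
    fun i => spanToMatrixColumn (fiberComponent φ S (r i)) (e (r i)) 0, ?_⟩
  intro k _ _ _ _ _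
  have hφk := matrixFiber_surjective (φ := φ) k hφ
  have hnilk := isNilpotent_of_matrixFiber_eq_zero k (isNilpotent_matrixFiberKer k hφ hnil)
  obtain ⟨h1, h2, h3⟩ := isCompleteListOfSimples_matrixColumn
    (Ψ := RingHomClass.toRingHom (matrixFiber φ k)) hφk hnilk
  refine ⟨fun i => MatrixColumn.bundled (fiberComponent φ k (r i)),
    fun i => bundledSpan (baseChangeRingHom 𝓡 A S k (e (r i))),
    fun i => columnMap φ k (r i), fun i => spanMap _ _,
    fun i => isScalarExtension_columnMap φ (r i), fun i => isScalarExtension_spanMap _ (he _),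
    ⟨fun i => h1 (r i), fun i j hij => h2 _ _ (r.injective.ne hij), fun N _ _ hN => ?_⟩,
    fun i => ⟨spanToMatrixColumn (fiberComponent φ k (r i)) _ 0, fun m => ?_, ?_⟩⟩
  · obtain ⟨j, hj⟩ := h3 N hN
    obtain ⟨i, rfl⟩ := r.surjective j
    exact ⟨i, hj⟩
  · change baseChangeRingHom 𝓡 A S k m.1 • MatrixColumn.of _ (Pi.single 0 1) =
      columnMap φ k (r i) (m.1 • MatrixColumn.of _ (Pi.single 0 1))
    rw [columnMap_smul, columnMap_of]
    congr 2
    ext a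
    by_cases ha : a = 0
    · subst ha
      simp
    · simp [ha]
  · refine isProjectiveCover_spanToMatrixColumn (Ψ := RingHomClass.toRingHom (matrixFiber φ k))
      hφk hnilk (r i) 0 ((he (r i)).map _) ?_
    funext j
    refine (matrixFiber_baseChange φ (e (r i)) j).trans ?_
    rw [show matrixFiber φ S (e (r i)) = E (r i) S from heE (r i)]
    exact piMatrixUnit_map _ j

end NilpotentKernel

theorem IsCompleteListOfSimples.nonempty_equiv {R : Type u} [Ring R] {ι κ : Type u}
    {V : ι → BundledModule R} {W : κ → BundledModule R}
    (hV : IsCompleteListOfSimples R V) (hW : IsCompleteListOfSimples R W) :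
    Nonempty (ι ≃ κ) := by
  choose f hf using fun i => hW.2.2 _ (hV.1 i)
  refine ⟨Equiv.ofBijective f ⟨fun i j hij => ?_, fun j => ?_⟩⟩
  · by_contra h
    obtain ⟨a⟩ := hf i
    obtain ⟨b⟩ := hf j
    rw [← hij] at b
    exact (hV.2.1 i j h).false (a.trans b.symm)
  · obtain ⟨i, ⟨a⟩⟩ := hV.2.2 _ (hW.1 j)
    obtain ⟨b⟩ := hf i
    refine ⟨i, ?_⟩
    by_contra h
    exact (hW.2.1 _ _ (Ne.symm h)).false (a.trans b)

theorem exists_isQuasifiniteDomain_subalgebra (R : Type*) {K : Type*} [CommRing R] [Field K]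
    [Algebra R K] [CharZero K] [Algebra.IsAlgebraic ℤ K] (T : Finset K) :
    ∃ S : Subalgebra R K, IsQuasifiniteDomain R S ∧ ∀ x ∈ T, x ∈ S := by
  obtain ⟨y, hy0, hy⟩ := Algebra.IsAlgebraic.exists_integral_multiples ℤ T
  set D : K := (y : K)
  have hD : D ≠ 0 := Int.cast_ne_zero.2 hy0
  set R' : Subalgebra R K := Algebra.adjoin R ((fun x => y • x) '' (T : Set K))
  have hfin : Module.Finite R R' := by
    refine Algebra.finite_adjoin_of_finite_of_isIntegral (T.finite_toSet.image _) ?_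
    rintro _ ⟨x, hx, rfl⟩
    exact (hy x hx).tower_top
  have hDR : D ∈ R' := intCast_mem R' y
  let S : Subalgebra R K :=
    { carrier := {x | ∃ n : ℕ, D ^ n * x ∈ R'}
      mul_mem' := by
        rintro a b ⟨n, hn⟩ ⟨m, hm⟩
        refine ⟨n + m, ?_⟩
        rw [pow_add, mul_mul_mul_comm]
        exact mul_mem hn hm
      add_mem' := by
        rintro a b ⟨n, hn⟩ ⟨m, hm⟩
        refine ⟨n + m, ?_⟩
        have : D ^ (n + m) * (a + b) = D ^ m * (D ^ n * a) + D ^ n * (D ^ m * b) := by ring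
        rw [this]
        exact add_mem (mul_mem (pow_mem hDR _) hn) (mul_mem (pow_mem hDR _) hm)
      algebraMap_mem' := fun r => ⟨0, by simp⟩ }
  have hRS : R' ≤ S := fun x hx => ⟨0, by simpa using hx⟩
  refine ⟨S, ⟨inferInstance, R'.comap S.val, ?_, ⟨⟨D, hRS hDR⟩, hDR⟩, ?_⟩, fun x hx =>
    ⟨1, ?_⟩⟩
  · let f : R' →ₗ[R] R'.comap S.val :=
      { toFun := fun x => ⟨⟨x, hRS x.2⟩, x.2⟩
        map_add' := fun _ _ => rfl
        map_smul' := fun _ _ => rfl }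
    exact Module.Finite.of_surjective f fun x => ⟨⟨x.1.1, x.2⟩, rfl⟩
  · refine IsLocalization.Away.mk _ ?_ ?_ ?_
    · have hinv : D⁻¹ ∈ S := ⟨1, by simp [hD]⟩
      exact IsUnit.of_mul_eq_one ⟨D⁻¹, hinv⟩ (Subtype.ext (mul_inv_cancel₀ hD))
    · rintro ⟨s, n, hn⟩
      exact ⟨n, ⟨⟨D ^ n * s, hRS hn⟩, hn⟩, Subtype.ext (mul_comm _ _)⟩
    · intro a b hab
      exact ⟨0, by rw [Subtype.ext hab]⟩
  · rw [pow_one, ← zsmul_eq_mul]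
    exact Algebra.subset_adjoin ⟨x, hx, rfl⟩

theorem exists_matrixFiber_of_isAlgClosed (𝓡 A K : Type u) [CommRing 𝓡] [Ring A] [Algebra 𝓡 A]
    [Module.Finite 𝓡 A] [Field K] [IsAlgClosed K] [Algebra 𝓡 K] :
    ∃ (n : ℕ) (d : ULift.{u} (Fin n) → ℕ) (_ : ∀ i, NeZero (d i))
      (φ : A →ₐ[𝓡] ∀ i, Matrix (Fin (d i)) (Fin (d i)) K),
      Function.Surjective (matrixFiber φ K) ∧ IsNilpotent (matrixFiberKer φ K) := by
  let B := K ⊗[𝓡] A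
  have : IsArtinianRing B := IsArtinianRing.of_finite K B
  let J := Ring.jacobson B
  obtain ⟨n, d, hd, ⟨w⟩⟩ := IsSemisimpleRing.exists_algEquiv_pi_matrix_of_isAlgClosed K (B ⧸ J)
  let f : B →ₐ[K] ∀ i : ULift.{u} (Fin n), Matrix (Fin (d i.down)) (Fin (d i.down)) K :=
    AlgHom.pi fun i => (Pi.evalAlgHom K _ i.down).comp
      (w.toAlgHom.comp (Ideal.Quotient.mkₐ K J))
  have hf : Function.Surjective f := fun m => by
    obtain ⟨b, hb⟩ := Ideal.Quotient.mkₐ_surjective K J (w.symm fun i => m ⟨i⟩)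
    refine ⟨b, ?_⟩
    funext i
    change w (Ideal.Quotient.mkₐ K J b) i.down = m i
    rw [hb, w.apply_symm_apply]
  have hfJ : ∀ b, f b = 0 → b ∈ J := fun b hb => by
    refine Ideal.Quotient.eq_zero_iff_mem.1 (w.injective ?_)
    rw [map_zero]
    funext i
    exact congrFun hb ⟨i⟩
  let φ := (f.restrictScalars 𝓡).comp (Algebra.TensorProduct.includeRight : A →ₐ[𝓡] B)
  let c := Algebra.TensorProduct.comm 𝓡 A K
  have hφ : ∀ x, matrixFiber φ K x = f (c x) := fun x => by
    induction x using TensorProduct.induction_on with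
    | zero => simp
    | tmul a t =>
      have h : c (a ⊗ₜ t) = t • ((1 : K) ⊗ₜ[𝓡] a) := by
        rw [TensorProduct.smul_tmul', smul_eq_mul, mul_one]
        rfl
      rw [h, map_smul]
      funext i
      rw [matrixFiber_tmul]
      rfl
    | add x y hx hy => simp only [map_add, hx, hy]
  refine ⟨n, fun i => d i.down, fun i => hd i.down, φ, fun m => ?_, ?_⟩
  · obtain ⟨b, rfl⟩ := hf m
    exact ⟨c.symm b, by rw [hφ, c.apply_symm_apply]⟩
  · obtain ⟨N, hN⟩ := IsSemiprimaryRing.isNilpotent (R := B)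
    have hpow : ∀ m, ∀ x ∈ matrixFiberKer φ K ^ m, c x ∈ J ^ m := fun m => by
      induction m with
      | zero => exact fun x _ => by rw [Submodule.pow_zero, Ideal.one_eq_top]; trivial
      | succ m ih =>
        intro x hx
        rw [pow_succ] at hx
        refine Submodule.mul_induction_on hx (fun y hy z hz => ?_) (fun y z hy hz => ?_)
        · rw [map_mul, Submodule.pow_succ]
          refine Ideal.mul_mem_mul (ih y hy) (hfJ _ ?_)
          rw [← hφ]
          exact hz
        · rw [map_add]
          exact add_mem hy hz
    refine ⟨N, eq_bot_iff.2 fun x hx => ?_⟩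
    have := hpow N x hx
    rw [hN] at this
    exact c.injective (by simpa using this)

section Descent

variable {𝓡 A K : Type u} [CommRing 𝓡] [Ring A] [Algebra 𝓡 A] [Field K] [Algebra 𝓡 K]

theorem exists_finset_mem_range_baseChange (z : A ⊗[𝓡] K) :
    ∃ T : Finset K, ∀ S : Subalgebra 𝓡 K, (∀ x ∈ T, x ∈ S) →
      ∃ z', baseChangeRingHom 𝓡 A S K z' = z := by
  classical
  induction z using TensorProduct.induction_on with
  | zero => exact ⟨∅, fun S _ => ⟨0, map_zero _⟩⟩
  | tmul a t => exact ⟨{t}, fun S hS => ⟨a ⊗ₜ ⟨t, hS t (by simp)⟩, rfl⟩⟩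
  | add x y hx hy =>
    obtain ⟨T, hT⟩ := hx
    obtain ⟨T', hT'⟩ := hy
    refine ⟨T ∪ T', fun S hS => ?_⟩
    obtain ⟨x', rfl⟩ := hT S fun x hx => hS x (Finset.mem_union_left _ hx)
    obtain ⟨y', rfl⟩ := hT' S fun x hx => hS x (Finset.mem_union_right _ hx)
    exact ⟨x' + y', map_add _ _ _⟩

theorem exists_finset_entries_mem [Module.Finite 𝓡 A] {P : Type*} [Finite P]
    (f : A →ₗ[𝓡] P → K) :
    ∃ T : Finset K, ∀ S : Subalgebra 𝓡 K, (∀ x ∈ T, x ∈ S) → ∀ a p, f a p ∈ S := by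
  classical
  have := Fintype.ofFinite P
  obtain ⟨s, hs⟩ := Module.Finite.fg_top (R := 𝓡) (M := A)
  refine ⟨(s ×ˢ Finset.univ).image fun q => f q.1 q.2, fun S hS a => ?_⟩
  have ha : a ∈ Submodule.span 𝓡 (s : Set A) := hs ▸ Submodule.mem_top
  induction ha using Submodule.span_induction with
  | mem x hx =>
    exact fun p => hS _ (Finset.mem_image.2 ⟨(x, p), by simpa using hx, rfl⟩)
  | zero => simp
  | add x y _ _ hx hy => exact fun p => by simpa using add_mem (hx p) (hy p)
  | smul r x _ hx => exact fun p => by simpa using S.smul_mem (hx p) r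

variable {κ : Type u} {d : κ → ℕ}

theorem exists_descent_of_entries_mem (ψ : A →ₐ[𝓡] ∀ i, Matrix (Fin (d i)) (Fin (d i)) K)
    (S : Subalgebra 𝓡 K) (hS : ∀ a i p q, ψ a i p q ∈ S) :
    ∃ φ : A →ₐ[𝓡] ∀ i, Matrix (Fin (d i)) (Fin (d i)) S,
      ∀ x, matrixFiber φ K x = matrixFiber ψ K x := by
  let f : (∀ i, Matrix (Fin (d i)) (Fin (d i)) S) →ₐ[𝓡]
      ∀ i, Matrix (Fin (d i)) (Fin (d i)) K :=
    AlgHom.pi fun i => S.val.mapMatrix.comp (Pi.evalAlgHom 𝓡 _ i)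
  have hf : Function.Injective f := fun x y h => by
    ext i p q
    exact congrFun (congrFun (congrFun h i) p) q
  have hψ : ∀ a, ψ a ∈ f.range := fun a =>
    ⟨fun i => Matrix.of fun p q => ⟨ψ a i p q, hS a i p q⟩, rfl⟩
  let φ := (AlgEquiv.ofInjective f hf).symm.toAlgHom.comp (ψ.codRestrict f.range hψ)
  have hφ : ∀ a, f (φ a) = ψ a := fun a =>
    congrArg Subtype.val ((AlgEquiv.ofInjective f hf).apply_symm_apply ⟨ψ a, hψ a⟩)
  refine ⟨φ, fun x => ?_⟩
  induction x using TensorProduct.induction_on with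
  | zero => simp
  | tmul a t =>
    funext i
    rw [matrixFiber_tmul, matrixFiber_tmul]
    congr 1
    exact congrFun (hφ a) i
  | add x y hx hy => simp only [map_add, hx, hy]

theorem matrixFiber_surjective_of_units {S : Type u} [CommRing S] [Algebra 𝓡 S] [Fintype κ]
    [DecidableEq κ] (φ : A →ₐ[𝓡] ∀ i, Matrix (Fin (d i)) (Fin (d i)) S)
    (h : ∀ p, ∃ z, matrixFiber φ S z = piMatrixUnit S p) :
    Function.Surjective (matrixFiber φ S) := by
  choose z hz using h
  refine fun m => ⟨∑ p, z p * ((1 : A) ⊗ₜ[𝓡] m p.1 p.2.1 p.2.2), ?_⟩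
  conv_rhs => rw [← sum_smul_piMatrixUnit m]
  rw [map_sum]
  refine Finset.sum_congr rfl fun p _ => ?_
  rw [map_mul, hz, matrixFiber_one_tmul, ← Algebra.commutes, ← Algebra.smul_def]

theorem isNilpotent_matrixFiberKer_of_injective [Module.Flat 𝓡 A] {S T : Type u} [CommRing S]
    [Algebra 𝓡 S] [CommRing T] [Algebra 𝓡 T] [Algebra S T] [IsScalarTower 𝓡 S T]
    (hST : Function.Injective (algebraMap S T))
    (φ : A →ₐ[𝓡] ∀ i, Matrix (Fin (d i)) (Fin (d i)) S)
    (h : IsNilpotent (matrixFiberKer φ T)) : IsNilpotent (matrixFiberKer φ S) := by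
  obtain ⟨N, hN⟩ := h
  set f := Algebra.TensorProduct.map (AlgHom.id 𝓡 A) (IsScalarTower.toAlgHom 𝓡 S T)
  have hf : Function.Injective f := Module.Flat.lTensor_preserves_injective_linearMap
    (M := A) (IsScalarTower.toAlgHom 𝓡 S T).toLinearMap hST
  have hle : (matrixFiberKer φ S).map f.toLinearMap ≤ matrixFiberKer φ T := by
    rintro _ ⟨x, hx, rfl⟩
    have hx' : matrixFiber φ S x = 0 := hx
    funext i
    refine (matrixFiber_baseChange φ x i).trans ?_
    rw [hx']
    ext
    simp
  refine ⟨N, eq_bot_iff.2 fun x hx => ?_⟩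
  have h1 : f x ∈ (matrixFiberKer φ S ^ N).map f.toLinearMap := ⟨x, hx, rfl⟩
  rw [Submodule.map_pow] at h1
  have h2 := pow_le_pow_left' hle N h1
  rw [hN] at h2
  exact hf (by simpa using h2)

theorem exists_quasifinite_descent [CharZero K] [Algebra.IsAlgebraic ℤ K] [Module.Finite 𝓡 A]
    [Module.Flat 𝓡 A] [Fintype κ] [DecidableEq κ]
    (ψ : A →ₐ[𝓡] ∀ i, Matrix (Fin (d i)) (Fin (d i)) K)
    (hψ : Function.Surjective (matrixFiber ψ K)) (hnil : IsNilpotent (matrixFiberKer ψ K)) :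
    ∃ S : Subalgebra 𝓡 K, IsQuasifiniteDomain 𝓡 S ∧
      ∃ φ : A →ₐ[𝓡] ∀ i, Matrix (Fin (d i)) (Fin (d i)) S,
        Function.Surjective (matrixFiber φ S) ∧ IsNilpotent (matrixFiberKer φ S) := by
  classical
  obtain ⟨T₀, hT₀⟩ := exists_finset_entries_mem (𝓡 := 𝓡)
    (P := Σ i, Fin (d i) × Fin (d i))
    { toFun := fun a p => ψ a p.1 p.2.1 p.2.2
      map_add' := fun x y => by rw [map_add]; rfl
      map_smul' := fun r x => by rw [map_smul]; rfl }
  choose z hz using fun p => hψ (piMatrixUnit K p)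
  choose T hT using fun p => exists_finset_mem_range_baseChange (z p)
  obtain ⟨S, hS, hTS⟩ := exists_isQuasifiniteDomain_subalgebra 𝓡
    (T₀ ∪ Finset.univ.biUnion T)
  obtain ⟨φ, hφ⟩ := exists_descent_of_entries_mem ψ S fun a i p q =>
    hT₀ S (fun x hx => hTS x (Finset.mem_union_left _ hx)) a ⟨i, p, q⟩
  refine ⟨S, hS, φ, matrixFiber_surjective_of_units φ fun p => ?_,
    isNilpotent_matrixFiberKer_of_injective (T := K) Subtype.val_injective φ ?_⟩
  · obtain ⟨z', hz'⟩ := hT p S fun x hx => hTS x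
      (Finset.mem_union_right _ (Finset.mem_biUnion.2 ⟨p, Finset.mem_univ _, hx⟩))
    refine ⟨z', ?_⟩
    funext i
    have h := matrixFiber_baseChange φ (T := K) z' i
    rw [hz', hφ, hz, ← piMatrixUnit_map (S := S)] at h
    exact (Matrix.map_injective (FaithfulSMul.algebraMap_injective S K) h).symm
  · have : matrixFiberKer φ K = matrixFiberKer ψ K := by
      ext x
      rw [LinearMap.mem_ker, LinearMap.mem_ker]
      change matrixFiber φ K x = 0 ↔ matrixFiber ψ K x = 0
      rw [hφ]
    rwa [this]

end Descent

end Auxiliary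

/-- Let `𝓡` be a quasifinite domain over `ℤ` and `A` an `𝓡`-algebra
which is flat and finitely generated as an `𝓡`-module.  Let `Qbar` be an algebraic
closure of `ℚ` (with a given `𝓡`-algebra structure, i.e. a geometric point of `𝓡`), and
let `ι` index a complete irredundant list `V` of the simple `A ⊗[𝓡] Qbar`-modules.  Then
there exist a quasifinite domain `𝓡'` over `𝓡` and families `(L i)`, `(P i)` of
`A ⊗[𝓡] 𝓡'`-modules, with surjections-to-be `π i : P i → L i`, such that for every
geometric point `𝓡' → k` (an algebraically closed field `k` with a compatible algebra
structure): the base changes of the `L i` to `A ⊗[𝓡] k` form a complete, pairwise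
non-isomorphic list of the simple `A ⊗[𝓡] k`-modules, and for each `i` the base change
of `P i`, with the base-changed map to the base change of `L i`, is its projective
cover. -/
theorem lifting_of_simples_and_projective_covers
    (𝓡 : Type u) [CommRing 𝓡] (h𝓡 : IsQuasifiniteDomain ℤ 𝓡)
    (A : Type u) [Ring A] [Algebra 𝓡 A] [Module.Finite 𝓡 A] [Module.Flat 𝓡 A]
    (Qbar : Type u) [Field Qbar] [Algebra ℚ Qbar] [IsAlgClosure ℚ Qbar] [Algebra 𝓡 Qbar]
    (ι : Type u) (V : ι → BundledModule (A ⊗[𝓡] Qbar))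
    (hV : IsCompleteListOfSimples (A ⊗[𝓡] Qbar) V) :
    ∃ E : QuasifiniteExtension 𝓡,
      ∃ (L P : ι → BundledModule (A ⊗[𝓡] E.carrier))
        (π : ∀ i, (P i).carrier →ₗ[A ⊗[𝓡] E.carrier] (L i).carrier),
        ∀ (k : Type u) [Field k] [IsAlgClosed k] [Algebra E.carrier k] [Algebra 𝓡 k]
          [IsScalarTower 𝓡 E.carrier k],
          ∃ (Lk Pk : ι → BundledModule (A ⊗[𝓡] k))
            (fL : ∀ i, (L i).carrier →+ (Lk i).carrier)
            (fP : ∀ i, (P i).carrier →+ (Pk i).carrier),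
            (∀ i, IsScalarExtension (baseChangeRingHom 𝓡 A E.carrier k)
                (L i).carrier (Lk i).carrier (fL i)) ∧
            (∀ i, IsScalarExtension (baseChangeRingHom 𝓡 A E.carrier k)
                (P i).carrier (Pk i).carrier (fP i)) ∧
            IsCompleteListOfSimples (A ⊗[𝓡] k) Lk ∧
            (∀ i, ∃ πk : (Pk i).carrier →ₗ[A ⊗[𝓡] k] (Lk i).carrier,
              (∀ m : (P i).carrier, πk (fP i m) = fL i (π i m)) ∧
              IsProjectiveCover πk) := by
  have := IsAlgClosure.isAlgClosed ℚ (K := Qbar)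
  have halg : Algebra.IsAlgebraic ℚ Qbar := IsAlgClosure.isAlgebraic
  have : CharZero Qbar := algebraRat.charZero Qbar
  have : Algebra.IsAlgebraic ℤ Qbar := (IsFractionRing.comap_isAlgebraic_iff (K := ℚ)).2 halg
  obtain ⟨n, d, hd, ψ, hψ, hnil⟩ := exists_matrixFiber_of_isAlgClosed 𝓡 A Qbar
  obtain ⟨r⟩ := hV.nonempty_equiv (isCompleteListOfSimples_matrixColumn
    (Ψ := RingHomClass.toRingHom (matrixFiber ψ Qbar)) hψ
    (isNilpotent_of_matrixFiber_eq_zero Qbar hnil))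
  obtain ⟨S, hS, φ, hφ, hφnil⟩ := exists_quasifinite_descent ψ hψ hnil
  exact ⟨⟨S, hS⟩, exists_families_of_matrixFiber hφ hφnil r⟩
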